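/- The skew-symmetric augmented matrix (B | A) of dimension 4 over the integers given by B with rows (0, -1, -2, 0), (1, 0, 0, 2), (2, 0, 0, 1), (0, -2, -1, 0) and A = (-1, 1, 1, -1)ᵀ is not trivial: it is not S-equivalent to the empty matrix. (This is the augmented matrix associated with Kishino's doodle, whose nontriviality shows that Kishino's doodle is non-classical.) -/

import Mathlib

/-- A skew-symmetric augmented matrix `(B ∣ A)` of dimension `n`:
`B` is an `n × n` integer matrix with `Bᵀ = -B` and `A` is an integer
column vector of length `n`.  Dimension `0` gives the empty matrix. -/
structure SkewAug where
  n : ℕ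
  B : Matrix (Fin n) (Fin n) ℤ
  A : Fin n → ℤ
  skew : B.transpose = -B

namespace SkewAug

/-- The permutation matrix of a permutation `σ` of `Fin n`. -/
def permMatrixOf {n : ℕ} (σ : Equiv.Perm (Fin n)) : Matrix (Fin n) (Fin n) ℤ :=
  Matrix.of fun i j => if σ j = i then 1 else 0

/-- `P` is a permutation matrix. -/
def IsPermMatrix {n : ℕ} (P : Matrix (Fin n) (Fin n) ℤ) : Prop :=
  ∃ σ : Equiv.Perm (Fin n), P = permMatrixOf σ

/-- `PermStep M N` : `N` is a permutation of `M`, i.e. there is a permutation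
matrix `P` with `N = (P M.B Pᵀ ∣ P M.A)`. -/
def PermStep (M N : SkewAug) : Prop :=
  ∃ (h : M.n = N.n) (P : Matrix (Fin N.n) (Fin N.n) ℤ),
    IsPermMatrix P ∧
    N.B = P * (Matrix.reindex (finCongr h) (finCongr h) M.B) * P.transpose ∧
    N.A = P.mulVec (fun i => M.A (Fin.cast h.symm i))

/-- `DeleteAt M S N` : `N` is obtained from `M` by deleting the rows and
columns of `M.B` indexed by `S` and the entries of `M.A` indexed by `S`. -/
def DeleteAt (M : SkewAug) (S : Set (Fin M.n)) (N : SkewAug) : Prop :=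
  ∃ e : Fin N.n → Fin M.n, StrictMono e ∧ (∀ k, k ∈ Set.range e ↔ k ∉ S) ∧
    (∀ i j, N.B i j = M.B (e i) (e j)) ∧ (∀ i, N.A i = M.A (e i))

/-- The condition allowing a reduction of type 1 at index `j`:
`A j = 0` and the `j`-th column of `B` is the zero vector or equals `A`. -/
def Red1Cond (M : SkewAug) (j : Fin M.n) : Prop :=
  M.A j = 0 ∧ ((∀ i, M.B i j = 0) ∨ (∀ i, M.B i j = M.A i))

/-- The condition allowing a reduction of type 2 at distinct indices `r, t`:
`A r = -A t` and the sum of the `r`-th and `t`-th columns of `B` equals `A`. -/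
def Red2Cond (M : SkewAug) (r t : Fin M.n) : Prop :=
  r ≠ t ∧ M.A r = -M.A t ∧ ∀ i, M.B i r + M.B i t = M.A i

/-- `N` is obtained from `M` by a reduction of type 1. -/
def Red1 (M N : SkewAug) : Prop :=
  ∃ j : Fin M.n, Red1Cond M j ∧ DeleteAt M {j} N

/-- `N` is obtained from `M` by a reduction of type 2. -/
def Red2 (M N : SkewAug) : Prop :=
  ∃ r t : Fin M.n, Red2Cond M r t ∧ DeleteAt M {r, t} N

/-- A single move: a permutation, a reduction of type 1 or 2, or an
extension of type 1 or 2 (the inverse of a reduction). -/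
def Move (M N : SkewAug) : Prop :=
  PermStep M N ∨ Red1 M N ∨ Red2 M N ∨ Red1 N M ∨ Red2 N M

/-- S-equivalence: `M` can be transformed into `N` by a finite sequence of
moves. -/
def SEquiv : SkewAug → SkewAug → Prop :=
  Relation.ReflTransGen Move

/-- A reduction of type 1 or type 2 can be applied to `M`. -/
def Reducible (M : SkewAug) : Prop :=
  (∃ j, Red1Cond M j) ∨ (∃ r t, Red2Cond M r t)

/-- `M` is irreducible: no reduction of type 1 or type 2 can be applied. -/
def Irreducible (M : SkewAug) : Prop := ¬ Reducible M

/-- The empty skew-symmetric augmented matrix. -/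
def empty : SkewAug := ⟨0, 0, 0, by simp⟩

/-- `M` is trivial if it is S-equivalent to the empty matrix. -/
def Trivial (M : SkewAug) : Prop := SEquiv M empty

end SkewAug

/-- The `B`-matrix of the augmented matrix associated with Kishino's doodle. -/
def kishinoB : Matrix (Fin 4) (Fin 4) ℤ :=
  !![0, -1, -2, 0; 1, 0, 0, 2; 2, 0, 0, 1; 0, -2, -1, 0]

/-- The augmented column of the augmented matrix of Kishino's doodle. -/
def kishinoA : Fin 4 → ℤ := ![-1, 1, 1, -1]

/-- The skew-symmetric augmented matrix associated with Kishino's doodle. -/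
def kishino : SkewAug := ⟨4, kishinoB, kishinoA, by decide⟩

namespace SkewAug

/-- Local weight used in the invariant. -/
def wt (a b x : ℤ) : ℤ := if 2 * x = a - b then a * b else 0

/-- The invariant. -/
def inv (M : SkewAug) : ℤ := ∑ i, ∑ j, wt (M.A i) (M.A j) (M.B i j)

theorem wt_zero_left (b x : ℤ) : wt 0 b x = 0 := by simp [wt]

theorem wt_zero_right (a x : ℤ) : wt a 0 x = 0 := by simp [wt]

theorem wt_flip_right (a b x : ℤ) : wt a b x + wt a (-b) (a - x) = 0 := by
  unfold wt
  by_cases h : 2 * x = a - b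
  · rw [if_pos h, if_pos (by linarith)]; ring
  · rw [if_neg h, if_neg (by intro h'; apply h; linarith)]; ring

theorem wt_flip_left (a b x : ℤ) : wt a b x + wt (-a) b (-b - x) = 0 := by
  unfold wt
  by_cases h : 2 * x = a - b
  · rw [if_pos h, if_pos (by linarith)]; ring
  · rw [if_neg h, if_neg (by intro h'; apply h; linarith)]; ring

theorem skew_apply (M : SkewAug) (i j : Fin M.n) : M.B i j = - M.B j i := by
  have := congrFun (congrFun M.skew j) i
  simpa using this

theorem inv_of_equiv {M N : SkewAug} (e : Fin N.n ≃ Fin M.n)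
    (hB : ∀ i j, N.B i j = M.B (e i) (e j)) (hA : ∀ i, N.A i = M.A (e i)) :
    inv M = inv N := by
  unfold inv
  rw [← Equiv.sum_comp e]
  refine Finset.sum_congr rfl fun i _ => ?_
  rw [← Equiv.sum_comp e]
  refine Finset.sum_congr rfl fun j _ => ?_
  rw [hB, hA, hA]

theorem inv_permStep {M N : SkewAug} (h : PermStep M N) : inv M = inv N := by
  obtain ⟨h, P, ⟨σ, rfl⟩, hB, hA⟩ := h
  have key : ∀ i k : Fin N.n, permMatrixOf σ i k = if k = σ.symm i then 1 else 0 := by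
    intro i k
    simp [permMatrixOf, Equiv.eq_symm_apply]
  refine inv_of_equiv (σ.symm.trans (finCongr h.symm)) (fun i j => ?_) (fun i => ?_)
  · rw [hB]
    simp [Matrix.mul_apply, key]
  · rw [hA]
    simp [Matrix.mulVec, dotProduct, key]

theorem sum_delete {m n : ℕ} (e : Fin n → Fin m) (he : Function.Injective e)
    (S : Finset (Fin m)) (hS : ∀ k, k ∈ Set.range e ↔ k ∉ S) (F : Fin m → ℤ) :
    ∑ k, F k = ∑ k ∈ S, F k + ∑ i, F (e i) := by
  have h1 : ∑ i, F (e i) = ∑ k ∈ Finset.univ.map ⟨e, he⟩, F k := by simp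
  have h2 : Finset.univ.map ⟨e, he⟩ = Sᶜ := by
    ext k
    have := hS k
    simpa using this
  rw [h1, h2, Finset.sum_add_sum_compl]

theorem inv_delete {M N : SkewAug} (S : Finset (Fin M.n)) (h : DeleteAt M (S : Set (Fin M.n)) N)
    (hr : ∀ i, ∑ k ∈ S, wt (M.A i) (M.A k) (M.B i k) = 0)
    (hl : ∀ j, ∑ k ∈ S, wt (M.A k) (M.A j) (M.B k j) = 0) : inv M = inv N := by
  obtain ⟨e, he, hS, hB, hA⟩ := h
  have hS' : ∀ k, k ∈ Set.range e ↔ k ∉ S := by simpa using hS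
  unfold inv
  rw [sum_delete e he.injective S hS', Finset.sum_comm, Finset.sum_eq_zero (fun j _ => hl j),
    zero_add]
  refine Finset.sum_congr rfl fun i _ => ?_
  rw [sum_delete e he.injective S hS', hr, zero_add]
  refine Finset.sum_congr rfl fun j _ => ?_
  rw [hB, hA, hA]

theorem inv_red1 {M N : SkewAug} (h : Red1 M N) : inv M = inv N := by
  obtain ⟨j, ⟨h0, -⟩, hd⟩ := h
  refine inv_delete {j} (by simpa using hd) (fun i => ?_) (fun i => ?_)
  · simp [h0, wt_zero_right]
  · simp [h0, wt_zero_left]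

theorem inv_red2 {M N : SkewAug} (h : Red2 M N) : inv M = inv N := by
  obtain ⟨r, t, ⟨hne, hA, hB⟩, hd⟩ := h
  have hAt : M.A t = - M.A r := by linarith
  refine inv_delete {r, t} (by simpa using hd) (fun i => ?_) (fun j => ?_)
  · rw [Finset.sum_pair hne, hAt, show M.B i t = M.A i - M.B i r by linarith [hB i]]
    exact wt_flip_right _ _ _
  · rw [Finset.sum_pair hne, hAt, show M.B t j = - M.A j - M.B r j by
      linarith [hB j, skew_apply M t j, skew_apply M r j]]
    exact wt_flip_left _ _ _

theorem inv_move {M N : SkewAug} (h : Move M N) : inv M = inv N := by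
  rcases h with h | h | h | h | h
  · exact inv_permStep h
  · exact inv_red1 h
  · exact inv_red2 h
  · exact (inv_red1 h).symm
  · exact (inv_red2 h).symm

theorem inv_sEquiv {M N : SkewAug} (h : SEquiv M N) : inv M = inv N := by
  unfold SEquiv at h
  induction h with
  | refl => rfl
  | tail _ h ih => exact ih.trans (inv_move h)

end SkewAug

/-- The skew-symmetric augmented matrix associated with
Kishino's doodle is not trivial: it is not S-equivalent to the empty matrix.
(Hence Kishino's doodle is non-classical.) -/
theorem kishino_not_trivial : ¬ SkewAug.Trivial kishino := by
  intro h
  have h1 := SkewAug.inv_sEquiv h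
  have h2 : SkewAug.inv kishino = 4 := by decide
  have h3 : SkewAug.inv SkewAug.empty = 0 := by decide
  omega
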